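/- Let M be a quasianalytic derivation closed weight sequence such that m_k := M_k/k! is log-convex and m_k^{1/k} → ∞. Then the ring of germs at 0 ∈ ℝ of complex-valued E^{(M)}-functions has property (D): for every function f defined on an open neighborhood of 0 in ℝ and every integer j ≥ 1, if f^j and f^{j+1} are of class E^{(M)} on some open neighborhood of 0, then f is of class E^{(M)} on some open neighborhood of 0. -/

import Mathlib

open Filter Set Asymptotics MeasureTheory

noncomputable section

/-- `M` is a weight sequence: `M 0 = 1`, positive, `M 1 ≥ 1`, log-convex and
`M k ^ (1/k) → ∞`. -/
def IsWeightSeq (M : ℕ → ℝ) : Prop :=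
  M 0 = 1 ∧ (∀ k, 0 < M k) ∧ 1 ≤ M 1 ∧
    (∀ k : ℕ, 1 ≤ k → M k ^ 2 ≤ M (k - 1) * M (k + 1)) ∧
    Tendsto (fun k : ℕ => M k ^ (1 / (k : ℝ))) atTop atTop

/-- The sequence `m k = M k / k!`. -/
def mseq (M : ℕ → ℝ) : ℕ → ℝ := fun k => M k / (Nat.factorial k : ℝ)

/-- Log-convexity of a sequence. -/
def LogConvexSeq (m : ℕ → ℝ) : Prop := ∀ k : ℕ, 1 ≤ k → m k ^ 2 ≤ m (k - 1) * m (k + 1)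

/-- `m k ^ (1/k) → ∞`. -/
def RootTendsToInfty (m : ℕ → ℝ) : Prop :=
  Tendsto (fun k : ℕ => m k ^ (1 / (k : ℝ))) atTop atTop

/-- Moderate growth of a sequence. -/
def ModerateGrowth (M : ℕ → ℝ) : Prop :=
  ∃ C : ℝ, 0 < C ∧ ∀ j k : ℕ, M (j + k) ≤ C ^ (j + k) * M j * M k

/-- Derivation closedness of a sequence. -/
def DerivClosed (M : ℕ → ℝ) : Prop :=
  ∃ C : ℝ, 0 < C ∧ ∀ k : ℕ, M (k + 1) ≤ C ^ (k + 1) * M k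

/-- Non-quasianalyticity: `∑_{k≥1} M (k-1) / M k = ∑_{k≥1} 1/μ_k < ∞`. -/
def NonQuasianalytic (M : ℕ → ℝ) : Prop := Summable fun k : ℕ => M k / M (k + 1)

/-- Quasianalyticity: `∑_{k≥1} 1/μ_k = ∞`. -/
def Quasianalytic (M : ℕ → ℝ) : Prop := ¬ NonQuasianalytic M

/-- The associated function `h_m (t) = inf_k m k * t ^ k`. -/
def hFun (m : ℕ → ℝ) (t : ℝ) : ℝ := ⨅ k : ℕ, m k * t ^ k

/-- `Γ̄_m (t) = min {k | h_m t = m k * t ^ k}`. -/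
def GammaBar (m : ℕ → ℝ) (t : ℝ) : ℕ := sInf {k : ℕ | hFun m t = m k * t ^ k}

/-- `Γ̲_m (t) = min {k | m (k+1) / m k ≥ 1 / t}`. -/
def GammaLow (m : ℕ → ℝ) (t : ℝ) : ℕ := sInf {k : ℕ | 1 / t ≤ m (k + 1) / m k}

/-- The set whose supremum is `mg (M, N)`. -/
def mgSet (M N : ℕ → ℝ) : Set ℝ :=
  {x | ∃ j k : ℕ, 1 ≤ j + k ∧ x = (M (j + k) / (N j * N k)) ^ (1 / (j + k : ℝ))}

/-- `mg (M, N) = sup_{j+k ≥ 1} (M (j+k) / (N j * N k)) ^ (1/(j+k))`. -/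
def mg (M N : ℕ → ℝ) : ℝ := sSup (mgSet M N)

/-- `mg (M, N) < ∞`. -/
def MgFinite (M N : ℕ → ℝ) : Prop := BddAbove (mgSet M N)

/-- A weight sequence is regular: `m k ^ (1/k) → ∞`, derivation closed, and
`Γ̄_m (C t) ≤ Γ̲_m t` for some `C ≥ 1`. -/
def RegularWS (M : ℕ → ℝ) : Prop :=
  RootTendsToInfty (mseq M) ∧ DerivClosed M ∧
    ∃ C : ℝ, 1 ≤ C ∧ ∀ t : ℝ, 0 < t → GammaBar (mseq M) (C * t) ≤ GammaLow (mseq M) t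

/-- `f` is of class `E^{M}` (Roumieu) on the open set `U`. -/
def RoumieuOn {E : Type*} [NormedAddCommGroup E] [NormedSpace ℝ E]
    (M : ℕ → ℝ) (f : E → ℂ) (U : Set E) : Prop :=
  ContDiffOn ℝ (⊤ : ℕ∞) f U ∧
    ∀ V : Set E, IsOpen V → IsCompact (closure V) → closure V ⊆ U →
      ∃ C σ : ℝ, 0 < C ∧ 0 < σ ∧
        ∀ x ∈ V, ∀ k : ℕ, ‖iteratedFDerivWithin ℝ k f U x‖ ≤ C * σ ^ k * M k

/-- `f` is of class `E^{(M)}` (Beurling) on the open set `U`. -/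
def BeurlingOn {E : Type*} [NormedAddCommGroup E] [NormedSpace ℝ E]
    (M : ℕ → ℝ) (f : E → ℂ) (U : Set E) : Prop :=
  ContDiffOn ℝ (⊤ : ℕ∞) f U ∧
    ∀ V : Set E, IsOpen V → IsCompact (closure V) → closure V ⊆ U →
      ∀ σ : ℝ, 0 < σ → ∃ C : ℝ, 0 < C ∧
        ∀ x ∈ V, ∀ k : ℕ, ‖iteratedFDerivWithin ℝ k f U x‖ ≤ C * σ ^ k * M k

/-- A weight matrix: a nonempty, pointwise totally ordered family of weight sequences. -/
def IsWeightMatrix (W : Set (ℕ → ℝ)) : Prop :=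
  W.Nonempty ∧ (∀ M ∈ W, IsWeightSeq M) ∧
    ∀ M ∈ W, ∀ N ∈ W, (∀ k, M k ≤ N k) ∨ (∀ k, N k ≤ M k)

/-- R-regularity of a weight matrix. -/
def RRegular (W : Set (ℕ → ℝ)) : Prop :=
  (∀ M ∈ W, RootTendsToInfty (mseq M)) ∧
    (∀ M ∈ W, ∃ N ∈ W, ∃ C : ℝ, 1 ≤ C ∧ ∀ j : ℕ, M (j + 1) ≤ C ^ (j + 1) * N j) ∧
    (∀ M ∈ W, ∃ N ∈ W, ∃ C : ℝ, 1 ≤ C ∧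
      ∀ t : ℝ, 0 < t → GammaBar (mseq N) (C * t) ≤ GammaLow (mseq M) t)

/-- B-regularity of a weight matrix. -/
def BRegular (W : Set (ℕ → ℝ)) : Prop :=
  (∀ M ∈ W, RootTendsToInfty (mseq M)) ∧
    (∀ M ∈ W, ∃ N ∈ W, ∃ C : ℝ, 1 ≤ C ∧ ∀ j : ℕ, N (j + 1) ≤ C ^ j * M j) ∧
    (∀ M ∈ W, ∃ N ∈ W, ∃ C : ℝ, 1 ≤ C ∧
      ∀ t : ℝ, 0 < t → GammaBar (mseq M) (C * t) ≤ GammaLow (mseq N) t)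

/-- R-moderate growth of a weight matrix. -/
def RModerateGrowth (W : Set (ℕ → ℝ)) : Prop := ∀ M ∈ W, ∃ N ∈ W, MgFinite M N

/-- B-moderate growth of a weight matrix. -/
def BModerateGrowth (W : Set (ℕ → ℝ)) : Prop := ∀ M ∈ W, ∃ N ∈ W, MgFinite N M

/-- `f` is of class `E^{W}` (Roumieu, weight matrix) on the open set `U`. -/
def MatrixRoumieuOn {E : Type*} [NormedAddCommGroup E] [NormedSpace ℝ E]
    (W : Set (ℕ → ℝ)) (f : E → ℂ) (U : Set E) : Prop :=
  ContDiffOn ℝ (⊤ : ℕ∞) f U ∧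
    ∀ V : Set E, IsOpen V → IsCompact (closure V) → closure V ⊆ U →
      ∃ M ∈ W, ∃ C σ : ℝ, 0 < C ∧ 0 < σ ∧
        ∀ x ∈ V, ∀ k : ℕ, ‖iteratedFDerivWithin ℝ k f U x‖ ≤ C * σ ^ k * M k

/-- `f` is of class `E^{(W)}` (Beurling, weight matrix) on the open set `U`. -/
def MatrixBeurlingOn {E : Type*} [NormedAddCommGroup E] [NormedSpace ℝ E]
    (W : Set (ℕ → ℝ)) (f : E → ℂ) (U : Set E) : Prop :=
  ContDiffOn ℝ (⊤ : ℕ∞) f U ∧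
    ∀ V : Set E, IsOpen V → IsCompact (closure V) → closure V ⊆ U →
      ∀ M ∈ W, ∀ σ : ℝ, 0 < σ → ∃ C : ℝ, 0 < C ∧
        ∀ x ∈ V, ∀ k : ℕ, ‖iteratedFDerivWithin ℝ k f U x‖ ≤ C * σ ^ k * M k

/-- `ω` is a weight function. -/
def IsWeightFunction (ω : ℝ → ℝ) : Prop :=
  ContinuousOn ω (Ici 0) ∧ MonotoneOn ω (Ici 0) ∧ (∀ t ∈ Ici (0 : ℝ), 0 ≤ ω t) ∧
    ((fun t => ω (2 * t)) =O[atTop] ω) ∧ (ω =o[atTop] fun t : ℝ => t) ∧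
    ((fun t => Real.log t) =o[atTop] ω) ∧ ConvexOn ℝ (Ici 0) fun t => ω (Real.exp t)

/-- The Young conjugate `φ*_ω (s) = sup_{t ≥ 0} (s t - ω (e^t))`. -/
def phiStar (ω : ℝ → ℝ) (s : ℝ) : ℝ := sSup ((fun t => s * t - ω (Real.exp t)) '' Ici 0)

/-- Non-quasianalyticity of a weight function. -/
def NonQuasianalyticW (ω : ℝ → ℝ) : Prop := IntegrableOn (fun t => ω t / t ^ 2) (Ici 1)

/-- `f` is of class `E^{ω}` (Roumieu) on the open set `U`. -/
def OmegaRoumieuOn {E : Type*} [NormedAddCommGroup E] [NormedSpace ℝ E]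
    (ω : ℝ → ℝ) (f : E → ℂ) (U : Set E) : Prop :=
  ContDiffOn ℝ (⊤ : ℕ∞) f U ∧
    ∀ V : Set E, IsOpen V → IsCompact (closure V) → closure V ⊆ U →
      ∃ C ρ : ℝ, 0 < C ∧ 0 < ρ ∧
        ∀ x ∈ V, ∀ k : ℕ,
          ‖iteratedFDerivWithin ℝ k f U x‖ ≤ C * Real.exp (phiStar ω (ρ * k) / ρ)

/-- `f` is of class `E^{(ω)}` (Beurling) on the open set `U`. -/
def OmegaBeurlingOn {E : Type*} [NormedAddCommGroup E] [NormedSpace ℝ E]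
    (ω : ℝ → ℝ) (f : E → ℂ) (U : Set E) : Prop :=
  ContDiffOn ℝ (⊤ : ℕ∞) f U ∧
    ∀ V : Set E, IsOpen V → IsCompact (closure V) → closure V ⊆ U →
      ∀ ρ : ℝ, 0 < ρ → ∃ C : ℝ, 0 < C ∧
        ∀ x ∈ V, ∀ k : ℕ,
          ‖iteratedFDerivWithin ℝ k f U x‖ ≤ C * Real.exp (phiStar ω (ρ * k) / ρ)

/-- The open ellipse `Ω_ε` with vertices `± cosh ε` and co-vertices `± i sinh ε`. -/
def OmegaE (ε : ℝ) : Set ℂ :=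
  {z : ℂ | (z.re / Real.cosh ε) ^ 2 + (z.im / Real.sinh ε) ^ 2 < 1}

/-- The sequence space `Λ^{M}`. -/
def Lambda (M : ℕ → ℝ) : Set (ℕ → ℂ) :=
  {c | ∃ ρ : ℝ, 0 < ρ ∧ ∃ C : ℝ, ∀ k, ‖c k‖ ≤ C * ρ ^ k * M k}

/-- `L(M)`: all non-quasianalytic weight sequences `N ≥ M` with `n = N/k!` log-convex. -/
def LM (M : ℕ → ℝ) : Set (ℕ → ℝ) :=
  {N | IsWeightSeq N ∧ NonQuasianalytic N ∧ (∀ k, M k ≤ N k) ∧ LogConvexSeq (mseq N)}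

/-- A quasianalytic weight sequence `M` is intersectable if `Λ^{M} = ⋂_{N ∈ L(M)} Λ^{N}`. -/
def Intersectable (M : ℕ → ℝ) : Prop := Lambda M = ⋂ N ∈ LM M, Lambda N

/-!
If `f ^ j` is flat at `0`, it vanishes near `0` by the Denjoy–Carleman theorem, and so does `f`.
Bang's proof of that theorem propagates the bounds `‖f^(k)‖ ≤ e ^ (k - n) M_k`: moving by a distance
`1 / (e μ_n)` costs one unit of `n`, and since `∑ 1 / μ_n = ∞`, any point is reached from a flat
point with `n` left as large as desired.

Otherwise `f ^ j = x ^ n u` with `u 0 ≠ 0`, the class being closed under division by `x`: Hadamard's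
formula loses one derivative, which derivation closedness restores. Comparing orders of vanishing in
`(f ^ (j + 1)) ^ j = (f ^ j) ^ (j + 1)` gives `f ^ (j + 1) = x ^ n v`, so that `f = v / u`. Leibniz'
formula for `u * (v / u) = v` bounds the derivatives of `v / u` recursively; the bounds stay in the
class because `m_i m_l ≤ m_1 m_(i + l - 1)` and `m_k / m_(k - 1) → ∞`.
-/

section LogConvex

variable {m : ℕ → ℝ}

lemma LogConvexSeq.monotone_ratio (hm : LogConvexSeq m) (hpos : ∀ k, 0 < m k) :
    Monotone fun k => m (k + 1) / m k := by
  refine monotone_nat_of_le_succ fun k => ?_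
  rw [div_le_div_iff₀ (hpos _) (hpos _), ← sq, mul_comm]
  exact hm (k + 1) k.succ_pos

lemma LogConvexSeq.mul_le_mul_add (hm : LogConvexSeq m) (hpos : ∀ k, 0 < m k) (p q : ℕ) :
    m (p + 1) * m (q + 1) ≤ m 1 * m (p + q + 1) := by
  induction p with
  | zero => simp
  | succ p ih =>
    have hratio : m (p + 2) / m (p + 1) ≤ m (p + q + 2) / m (p + q + 1) :=
      hm.monotone_ratio hpos (by lia)
    have hp := hpos (p + 1)
    have hpq := hpos (p + q + 1)
    calc m (p + 2) * m (q + 1)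
        = m (p + 2) / m (p + 1) * (m (p + 1) * m (q + 1)) := by field_simp
      _ ≤ m (p + q + 2) / m (p + q + 1) * (m 1 * m (p + q + 1)) := by
        have := hpos 1
        have := hpos (q + 1)
        have := hpos (p + q + 2)
        gcongr
      _ = m 1 * m (p + 1 + q + 1) := by
        rw [show p + 1 + q + 1 = p + q + 2 by lia]
        field_simp

lemma le_mul_pow_of_ratio_le (hpos : ∀ k, 0 < m k) {B : ℝ} (hB : ∀ k, m (k + 1) / m k ≤ B)
    (k : ℕ) : m k ≤ m 0 * B ^ k := by
  have hB0 : 0 ≤ B := (div_pos (hpos _) (hpos _)).le.trans (hB 0)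
  induction k with
  | zero => simp
  | succ k ih =>
    calc m (k + 1) ≤ B * m k := (div_le_iff₀ (hpos k)).mp (hB k)
      _ ≤ B * (m 0 * B ^ k) := by gcongr
      _ = m 0 * B ^ (k + 1) := by ring

lemma LogConvexSeq.tendsto_ratio_atTop (hm : LogConvexSeq m) (hpos : ∀ k, 0 < m k)
    (hroot : RootTendsToInfty m) : Tendsto (fun k => m (k + 1) / m k) atTop atTop := by
  refine tendsto_atTop_atTop_of_monotone (hm.monotone_ratio hpos) fun B => ?_
  by_contra! hB
  have hB0 : 0 < B := (div_pos (hpos _) (hpos _)).trans (hB 0)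
  obtain ⟨k, hk, hk1⟩ :=
    ((hroot.eventually_gt_atTop (max 1 (m 0) * B)).and (eventually_ge_atTop 1)).exists
  have hle : m k ≤ (max 1 (m 0) * B) ^ k := by
    calc m k ≤ m 0 * B ^ k := le_mul_pow_of_ratio_le hpos (fun k => (hB k).le) k
      _ ≤ max 1 (m 0) ^ k * B ^ k := by
        gcongr
        exact (le_max_right _ _).trans (le_self_pow₀ (le_max_left _ _) (by lia))
      _ = (max 1 (m 0) * B) ^ k := (mul_pow _ _ _).symm
  refine hk.not_ge ?_
  calc m k ^ (1 / (k : ℝ)) ≤ ((max 1 (m 0) * B) ^ k) ^ (1 / (k : ℝ)) :=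
        Real.rpow_le_rpow (hpos k).le hle (by positivity)
    _ = max 1 (m 0) * B := by
      rw [one_div, Real.pow_rpow_inv_natCast (by positivity) (by lia)]

lemma LogConvexSeq.sum_geometric_convolution_le (hm : LogConvexSeq m) (hpos : ∀ k, 0 < m k)
    {θ : ℝ} (hθ0 : 0 ≤ θ) (hθ1 : θ < 1) (k : ℕ) :
    ∑ l ∈ Finset.range (k + 1), θ ^ (k + 1 - l) * m (k + 1 - l) * m l ≤
      θ ^ (k + 1) * m (k + 1) * m 0 + (1 - θ)⁻¹ * (m 1 * m k) := by
  have hterm : ∀ l ∈ Finset.range k,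
      θ ^ (k + 1 - (l + 1)) * m (k + 1 - (l + 1)) * m (l + 1) ≤
        θ ^ (k - 1 - l) * (m 1 * m k) := by
    intro l hl
    obtain ⟨p, rfl⟩ : ∃ p, k = p + l + 1 :=
      ⟨k - l - 1, by have := Finset.mem_range.mp hl; lia⟩
    rw [show p + l + 1 + 1 - (l + 1) = p + 1 by lia, show p + l + 1 - 1 - l = p by lia, mul_assoc]
    exact mul_le_mul (pow_le_pow_of_le_one hθ0 hθ1.le p.le_succ) (hm.mul_le_mul_add hpos p l)
      (mul_pos (hpos _) (hpos _)).le (by positivity)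
  have hgeom : ∑ l ∈ Finset.range k, θ ^ (k - 1 - l) ≤ (1 - θ)⁻¹ := by
    rw [Finset.sum_range_reflect (fun i => θ ^ i), ← tsum_geometric_of_lt_one hθ0 hθ1]
    exact (summable_geometric_of_lt_one hθ0 hθ1).sum_le_tsum _ fun i _ => by positivity
  rw [Finset.sum_range_succ', add_comm, Nat.sub_zero]
  gcongr
  calc _ ≤ ∑ l ∈ Finset.range k, θ ^ (k - 1 - l) * (m 1 * m k) := Finset.sum_le_sum hterm
    _ ≤ (1 - θ)⁻¹ * (m 1 * m k) := by
      rw [← Finset.sum_mul]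
      have := hpos 1
      have := hpos k
      gcongr

lemma LogConvexSeq.tendsto_geometric_convolution_div (hm : LogConvexSeq m)
    (hpos : ∀ k, 0 < m k) (hroot : RootTendsToInfty m) {θ : ℝ} (hθ0 : 0 ≤ θ) (hθ1 : θ < 1) :
    Tendsto (fun k => (∑ l ∈ Finset.range k, θ ^ (k - l) * m (k - l) * m l) / m k)
      atTop (nhds 0) := by
  rw [← tendsto_add_atTop_iff_nat 1]
  have hpow : Tendsto (fun k => θ ^ (k + 1) * m 0) atTop (nhds (0 * m 0)) :=
    ((tendsto_pow_atTop_nhds_zero_of_lt_one hθ0 hθ1).comp (tendsto_add_atTop_nat 1)).mul_const _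
  have hratio : Tendsto (fun k => (1 - θ)⁻¹ * m 1 * (m (k + 1) / m k)⁻¹) atTop
      (nhds ((1 - θ)⁻¹ * m 1 * 0)) :=
    (hm.tendsto_ratio_atTop hpos hroot).inv_tendsto_atTop.const_mul _
  have hlim := hpow.add hratio
  simp only [zero_mul, mul_zero, add_zero] at hlim
  refine squeeze_zero (fun k => ?_) (fun k => ?_) hlim
  · exact div_nonneg (Finset.sum_nonneg fun l _ =>
      mul_nonneg (mul_nonneg (pow_nonneg hθ0 _) (hpos _).le) (hpos _).le) (hpos _).le
  · rw [div_le_iff₀ (hpos _)]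
    refine (hm.sum_geometric_convolution_le hpos hθ0 hθ1 k).trans_eq ?_
    have := hpos k
    have := hpos (k + 1)
    field_simp

/-- The hypothesis on `b` is the recursion satisfied by the Taylor coefficients of a quotient. -/
lemma LogConvexSeq.exists_forall_le_of_recursion (hm : LogConvexSeq m) (hpos : ∀ k, 0 < m k)
    (hroot : RootTendsToInfty m) {L σ ρ : ℝ} (hL : 0 ≤ L) (hσ : 0 ≤ σ) (hσρ : σ < ρ) :
    ∃ n : ℕ, ∀ (b : ℕ → ℝ) (B : ℝ), 2 * L ≤ B →
      (∀ k, b k ≤ L * (σ ^ k * m k) +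
        ∑ l ∈ Finset.range k, L * (σ ^ (k - l) * m (k - l)) * b l) →
      (∀ k < n, b k ≤ B * (ρ ^ k * m k)) → ∀ k, b k ≤ B * (ρ ^ k * m k) := by
  have hρ : 0 < ρ := hσ.trans_lt hσρ
  have hlim := (hm.tendsto_geometric_convolution_div hpos hroot (div_nonneg hσ hρ.le)
    ((div_lt_one hρ).mpr hσρ)).const_mul L
  rw [mul_zero] at hlim
  obtain ⟨n, hn⟩ := eventually_atTop.mp (hlim.eventually_le_const one_half_pos)
  refine ⟨n, fun b B hLB hrec hinit k => ?_⟩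
  have hB : 0 ≤ B := by linarith
  induction k using Nat.strong_induction_on with
  | _ k ih =>
  rcases lt_or_ge k n with hk | hk
  · exact hinit k hk
  have hw : 0 < ρ ^ k * m k := mul_pos (pow_pos hρ k) (hpos k)
  have hfirst : L * (σ ^ k * m k) ≤ B / 2 * (ρ ^ k * m k) := by
    have := hpos k
    gcongr
    linarith
  have hsum : ∑ l ∈ Finset.range k, L * (σ ^ (k - l) * m (k - l)) * b l ≤
      B / 2 * (ρ ^ k * m k) := by
    calc ∑ l ∈ Finset.range k, L * (σ ^ (k - l) * m (k - l)) * b l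
        ≤ ∑ l ∈ Finset.range k, L * (σ ^ (k - l) * m (k - l)) * (B * (ρ ^ l * m l)) := by
          gcongr with l hl
          · exact mul_nonneg hL (mul_nonneg (pow_nonneg hσ _) (hpos _).le)
          · exact ih l (Finset.mem_range.mp hl)
      _ = B * (ρ ^ k * m k) *
          (L * ((∑ l ∈ Finset.range k, (σ / ρ) ^ (k - l) * m (k - l) * m l) / m k)) := by
        rw [Finset.sum_div, Finset.mul_sum, Finset.mul_sum]
        refine Finset.sum_congr rfl fun l hl => ?_
        have hmk := hpos k
        rw [div_pow, ← pow_sub_mul_pow ρ (Finset.mem_range.mp hl).le]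
        field_simp
      _ ≤ B * (ρ ^ k * m k) * (1 / 2) := by
        gcongr
        exact hn k hk
      _ = B / 2 * (ρ ^ k * m k) := by ring
  linarith [hrec k]

end LogConvex

section DenjoyCarleman

variable {E : Type*} [NormedAddCommGroup E] [NormedSpace ℝ E]

/-- `F 0, F 1, F 2, …` are the successive derivatives of `F 0` on `s`. -/
def IsDerivSeqOn (F : ℕ → ℝ → E) (s : Set ℝ) : Prop :=
  ∀ k, ∀ x ∈ s, HasDerivAt (F k) (F (k + 1) x) x

/-- The estimate at the point `x` that Bang's proof of the Denjoy–Carleman theorem propagates: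
it improves the a priori bound `N k` on the `k`-th derivative by the factor `exp (n - k)`. -/
def BangBound (N : ℕ → ℝ) (F : ℕ → ℝ → E) (n : ℕ) (x : ℝ) : Prop :=
  ∀ k : ℕ, ‖F k x‖ ≤ Real.exp (k - n) * N k

variable {N : ℕ → ℝ} {F : ℕ → ℝ → E} {s t : Set ℝ} {a b : ℝ}

lemma IsDerivSeqOn.mono (hF : IsDerivSeqOn F t) (hst : s ⊆ t) : IsDerivSeqOn F s :=
  fun k x hx => hF k x (hst hx)

lemma IsDerivSeqOn.comp_neg (hF : IsDerivSeqOn F s) :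
    IsDerivSeqOn (fun k x => (-1 : ℝ) ^ k • F k (-x)) (Neg.neg ⁻¹' s) := fun k x hx => by
  simpa [pow_succ, Function.comp_def, Pi.smul_def] using
    ((hF k (-x) hx).scomp x (hasDerivAt_neg x)).const_smul ((-1 : ℝ) ^ k)

lemma IsDerivSeqOn.norm_le_exp_of_bangBound (hN : LogConvexSeq N) (hpos : ∀ k, 0 < N k)
    (hF : IsDerivSeqOn F (Icc a b)) (hFN : ∀ x ∈ Icc a b, ∀ k, ‖F k x‖ ≤ N k) {n : ℕ}
    (ha : BangBound N F (n + 1) a) {k : ℕ} (hk : k ≤ n + 1) {x : ℝ} (hx : x ∈ Icc a b) :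
    ‖F k x‖ ≤ Real.exp (k - (n + 1 : ℕ)) * N k *
      Real.exp (Real.exp 1 * (N (n + 1) / N n) * (x - a)) := by
  set c := Real.exp 1 * (N (n + 1) / N n) with hc
  have hc0 : 0 < c := mul_pos (Real.exp_pos 1) (div_pos (hpos _) (hpos _))
  induction hk using Nat.decreasingInduction generalizing x with
  | self =>
    refine (hFN x hx _).trans ?_
    rw [sub_self, Real.exp_zero, one_mul]
    exact le_mul_of_one_le_right (hpos _).le
      (Real.one_le_exp (mul_nonneg hc0.le (sub_nonneg.mpr hx.1)))
  | of_succ k hk ih =>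
    refine image_norm_le_of_norm_deriv_right_le_deriv_boundary (f' := F (k + 1))
      (B := fun z => Real.exp (k - (n + 1 : ℕ)) * N k * Real.exp (c * (z - a)))
      (B' := fun z => Real.exp (k - (n + 1 : ℕ)) * N k * (Real.exp (c * (z - a)) * c))
      (fun z hz => (hF k z hz).continuousAt.continuousWithinAt)
      (fun z hz => (hF k z (Ico_subset_Icc_self hz)).hasDerivWithinAt) ?_ (fun z => ?_)
      (fun z hz => ?_) hx
    · simpa using ha k
    · simpa using (((hasDerivAt_id z).sub_const a).const_mul c).exp.const_mul
        (Real.exp (k - (n + 1 : ℕ)) * N k)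
    · have hNk : N (k + 1) ≤ N (n + 1) / N n * N k :=
        (div_le_iff₀ (hpos k)).mp (hN.monotone_ratio hpos (Nat.lt_succ_iff.mp hk))
      calc ‖F (k + 1) z‖
          ≤ Real.exp ((k + 1 : ℕ) - (n + 1 : ℕ)) * N (k + 1) * Real.exp (c * (z - a)) :=
            ih (Ico_subset_Icc_self hz)
        _ ≤ Real.exp ((k + 1 : ℕ) - (n + 1 : ℕ)) * (N (n + 1) / N n * N k) *
            Real.exp (c * (z - a)) := by gcongr
        _ = Real.exp (k - (n + 1 : ℕ)) * N k * (Real.exp (c * (z - a)) * c) := by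
          rw [hc, show ((k + 1 : ℕ) - (n + 1 : ℕ) : ℝ) = k - (n + 1 : ℕ) + 1 by push_cast; ring,
            Real.exp_add]
          ring

lemma IsDerivSeqOn.bangBound_of_succ (hN : LogConvexSeq N) (hpos : ∀ k, 0 < N k)
    (hF : IsDerivSeqOn F (Icc a b)) (hFN : ∀ x ∈ Icc a b, ∀ k, ‖F k x‖ ≤ N k) {n : ℕ}
    (ha : BangBound N F (n + 1) a) (hab : a ≤ b)
    (hstep : b - a ≤ Real.exp (-1) * (N n / N (n + 1))) : BangBound N F n b := by
  intro k
  have hb : b ∈ Icc a b := right_mem_Icc.mpr hab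
  have hk0 := hpos k
  rcases le_or_gt k n with hk | hk
  · have hn0 := hpos n
    have hn1 := hpos (n + 1)
    have hexp : Real.exp 1 * (N (n + 1) / N n) * (b - a) ≤ 1 := by
      calc Real.exp 1 * (N (n + 1) / N n) * (b - a)
          ≤ Real.exp 1 * (N (n + 1) / N n) * (Real.exp (-1) * (N n / N (n + 1))) := by gcongr
        _ = 1 := by rw [Real.exp_neg]; field_simp
    calc ‖F k b‖ ≤ Real.exp (k - (n + 1 : ℕ)) * N k *
          Real.exp (Real.exp 1 * (N (n + 1) / N n) * (b - a)) :=
          hF.norm_le_exp_of_bangBound hN hpos hFN ha (by lia) hb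
      _ ≤ Real.exp (k - (n + 1 : ℕ)) * N k * Real.exp 1 := by gcongr
      _ = Real.exp (k - n) * N k := by
        rw [mul_right_comm, ← Real.exp_add]
        push_cast
        ring_nf
  · refine (hFN b hb k).trans (le_mul_of_one_le_left hk0.le (Real.one_le_exp ?_))
    rw [sub_nonneg]
    exact_mod_cast hk.le

lemma IsDerivSeqOn.bangBound_of_sub_le_sum (hN : LogConvexSeq N) (hpos : ∀ k, 0 < N k)
    (hF : IsDerivSeqOn F (Icc a b)) (hFN : ∀ x ∈ Icc a b, ∀ k, ‖F k x‖ ≤ N k)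
    (ha : ∀ k, F k a = 0) (hab : a ≤ b) {n p : ℕ} (hnp : n ≤ p)
    (hsum : b - a ≤ Real.exp (-1) * ∑ i ∈ Finset.Ico n p, N i / N (i + 1)) :
    BangBound N F n b := by
  induction hnp using Nat.decreasingInduction generalizing b with
  | self =>
    obtain rfl : b = a := by
      rw [Finset.Ico_self, Finset.sum_empty, mul_zero, sub_nonpos] at hsum
      exact hsum.antisymm hab
    intro k
    rw [ha, norm_zero]
    exact mul_nonneg (Real.exp_pos _).le (hpos k).le
  | of_succ n hn ih =>
    set δ := Real.exp (-1) * (N n / N (n + 1))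
    have hδ : 0 < δ := mul_pos (Real.exp_pos _) (div_pos (hpos _) (hpos _))
    have hsum0 : 0 ≤ Real.exp (-1) * ∑ i ∈ Finset.Ico (n + 1) p, N i / N (i + 1) :=
      mul_nonneg (Real.exp_pos _).le
        (Finset.sum_nonneg fun i _ => (div_pos (hpos _) (hpos _)).le)
    have hcb : max a (b - δ) ≤ b := max_le hab (sub_le_self b hδ.le)
    have hleft : Icc a (max a (b - δ)) ⊆ Icc a b := Icc_subset_Icc_right hcb
    have hright : Icc (max a (b - δ)) b ⊆ Icc a b := Icc_subset_Icc_left (le_max_left _ _)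
    refine (hF.mono hright).bangBound_of_succ hN hpos (fun x hx => hFN x (hright hx))
      (ih (hF.mono hleft) (fun x hx => hFN x (hleft hx)) (le_max_left _ _) ?_) hcb
      (by linarith [le_max_right a (b - δ)])
    rw [Finset.sum_eq_sum_Ico_succ_bot hn, mul_add] at hsum
    rw [sub_le_iff_le_add]
    exact max_le (by linarith) (by linarith)

lemma IsDerivSeqOn.eq_zero_right (hN : LogConvexSeq N) (hpos : ∀ k, 0 < N k)
    (hq : Quasianalytic N) (hF : IsDerivSeqOn F (Icc a b))
    (hFN : ∀ x ∈ Icc a b, ∀ k, ‖F k x‖ ≤ N k) (ha : ∀ k, F k a = 0) (hab : a ≤ b) :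
    F 0 b = 0 := by
  have hdiv : Tendsto (fun p => ∑ i ∈ Finset.range p, N i / N (i + 1)) atTop atTop :=
    (not_summable_iff_tendsto_nat_atTop_of_nonneg
      fun i => (div_pos (hpos i) (hpos (i + 1))).le).mp hq
  have hle (n : ℕ) : ‖F 0 b‖ ≤ Real.exp (-n) * N 0 := by
    obtain ⟨p, hp, hnp⟩ := ((hdiv.eventually_ge_atTop (Real.exp 1 * (b - a) +
      ∑ i ∈ Finset.range n, N i / N (i + 1))).and (eventually_ge_atTop n)).exists
    have hsum : b - a ≤ Real.exp (-1) * ∑ i ∈ Finset.Ico n p, N i / N (i + 1) := by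
      rw [Real.exp_neg, ← div_eq_inv_mul, le_div_iff₀ (Real.exp_pos 1),
        Finset.sum_Ico_eq_sub _ hnp]
      linarith
    simpa using hF.bangBound_of_sub_le_sum hN hpos hFN ha hab hnp hsum 0
  have hlim : Tendsto (fun n : ℕ => Real.exp (-n) * N 0) atTop (nhds 0) := by
    simpa using (Real.tendsto_exp_neg_atTop_nhds_zero.comp
      tendsto_natCast_atTop_atTop).mul_const (N 0)
  exact norm_le_zero_iff.mp (ge_of_tendsto' hlim hle)

theorem IsDerivSeqOn.eqOn_zero_of_quasianalytic (hN : LogConvexSeq N) (hpos : ∀ k, 0 < N k)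
    (hq : Quasianalytic N) (hs : s.OrdConnected) (hF : IsDerivSeqOn F s)
    (hFN : ∀ x ∈ s, ∀ k, ‖F k x‖ ≤ N k) (has : a ∈ s) (ha : ∀ k, F k a = 0) :
    EqOn (F 0) 0 s := by
  intro x hx
  rcases le_total a x with hax | hxa
  · have hsub : Icc a x ⊆ s := hs.out has hx
    exact (hF.mono hsub).eq_zero_right hN hpos hq (fun y hy => hFN y (hsub hy)) ha hax
  · have hsub : Icc (-a) (-x) ⊆ Neg.neg ⁻¹' s := fun y hy =>
      hs.out hx has ⟨le_neg.mp hy.2, neg_le.mp hy.1⟩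
    simpa using (hF.comp_neg.mono hsub).eq_zero_right hN hpos hq
      (fun y hy k => by simpa [norm_smul] using hFN (-y) (hsub hy) k)
      (fun k => by simp [ha]) (neg_le_neg hxa)

end DenjoyCarleman

section SmoothFunctions

variable {E : Type*} [NormedAddCommGroup E] [NormedSpace ℝ E]
  {F : ℕ → ℝ → E} {f : ℝ → E} {s : Set ℝ} {a x : ℝ}

lemma isDerivSeqOn_iteratedDeriv (hs : IsOpen s) (hf : ContDiffOn ℝ (⊤ : ℕ∞) f s) :
    IsDerivSeqOn (fun k => iteratedDeriv k f) s := by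
  intro k x hx
  have hsx := hs.mem_nhds hx
  have hdiff : DifferentiableAt ℝ (iteratedDerivWithin k f s) x :=
    (hf.differentiableOn_iteratedDerivWithin (by exact_mod_cast ENat.natCast_lt_top k)
      hs.uniqueDiffOn x hx).differentiableAt hsx
  have hdiff' : DifferentiableAt ℝ (iteratedDeriv k f) x := hdiff.congr_of_eventuallyEq
    ((iteratedDerivWithin_of_isOpen hs).symm.eventuallyEq_of_mem hsx)
  simpa only [iteratedDeriv_succ] using hdiff'.hasDerivAt

lemma IsDerivSeqOn.continuousOn (hF : IsDerivSeqOn F s) (k : ℕ) : ContinuousOn (F k) s :=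
  fun x hx => (hF k x hx).continuousAt.continuousWithinAt

lemma IsDerivSeqOn.iteratedDeriv_eqOn (hs : IsOpen s) (hF : IsDerivSeqOn F s) (k : ℕ) :
    EqOn (iteratedDeriv k (F 0)) (F k) s := by
  induction k with
  | zero => intro x _; simp
  | succ k ih =>
    intro x hx
    rw [iteratedDeriv_succ, (ih.eventuallyEq_of_mem (hs.mem_nhds hx)).deriv_eq]
    exact (hF k x hx).deriv

lemma IsDerivSeqOn.contDiffOn (hs : IsOpen s) (hF : IsDerivSeqOn F s) :
    ContDiffOn ℝ (⊤ : ℕ∞) (F 0) s := by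
  refine contDiffOn_of_differentiableOn_deriv fun k _ x hx => ?_
  have heq : EqOn (iteratedDerivWithin k (F 0) s) (F k) s :=
    (iteratedDerivWithin_of_isOpen hs).trans (hF.iteratedDeriv_eqOn hs k)
  exact (hF k x hx).differentiableAt.differentiableWithinAt.congr heq (heq hx)

lemma exists_Icc_superset_of_isCompact {α : Type*} [LinearOrder α] [TopologicalSpace α]
    [OrderClosedTopology α] {s K : Set α} (hs : s.OrdConnected) (hK : IsCompact K) (hKs : K ⊆ s)
    {a : α} (ha : a ∈ s) : ∃ p q, K ⊆ Icc p q ∧ a ∈ Icc p q ∧ Icc p q ⊆ s := by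
  have hne : (insert a K).Nonempty := insert_nonempty a K
  obtain ⟨p, hp, hpK⟩ := (hK.insert a).exists_isLeast hne
  obtain ⟨q, hq, hqK⟩ := (hK.insert a).exists_isGreatest hne
  have hsub : insert a K ⊆ Icc p q := fun x hx => ⟨hpK hx, hqK hx⟩
  have hins : insert a K ⊆ s := insert_subset ha hKs
  exact ⟨p, q, (subset_insert a K).trans hsub, hsub (mem_insert a K), hs.out (hins hp) (hins hq)⟩

/-- The sequence of derivatives of the difference quotient `dslope (F 0) a`, given by Hadamard's
integral formula. -/
def hadamardSeq (F : ℕ → ℝ → E) (a : ℝ) (k : ℕ) (x : ℝ) : E :=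
  ∫ t in (0 : ℝ)..1, t ^ k • F (k + 1) (a + t * (x - a))

lemma IsDerivSeqOn.intervalIntegrable_hadamard (hs : s.OrdConnected) (hF : IsDerivSeqOn F s)
    (ha : a ∈ s) (hx : x ∈ s) (k l : ℕ) :
    IntervalIntegrable (fun t => t ^ k • F l (a + t * (x - a))) volume 0 1 := by
  refine ContinuousOn.intervalIntegrable (ContinuousOn.smul (by fun_prop) ?_)
  refine (hF.continuousOn l).comp (by fun_prop) fun t ht => ?_
  rw [uIcc_of_le zero_le_one] at ht
  exact hs.convex.add_smul_sub_mem ha hx ht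

lemma norm_hadamard_integrand_le (hs : s.OrdConnected) {k l : ℕ} {C : ℝ}
    (hC : ∀ y ∈ s, ‖F l y‖ ≤ C) (ha : a ∈ s) (hx : x ∈ s) {t : ℝ} (ht : t ∈ uIoc (0 : ℝ) 1) :
    ‖t ^ k • F l (a + t * (x - a))‖ ≤ C := by
  rw [uIoc_of_le zero_le_one] at ht
  rw [norm_smul, norm_pow, Real.norm_of_nonneg ht.1.le]
  exact (mul_le_of_le_one_left (norm_nonneg _) (pow_le_one₀ ht.1.le ht.2)).trans
    (hC _ (hs.convex.add_smul_sub_mem ha hx (Ioc_subset_Icc_self ht)))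

lemma norm_hadamardSeq_le (hs : s.OrdConnected) {k : ℕ} {C : ℝ}
    (hC : ∀ y ∈ s, ‖F (k + 1) y‖ ≤ C) (ha : a ∈ s) (hx : x ∈ s) : ‖hadamardSeq F a k x‖ ≤ C := by
  simpa [hadamardSeq] using intervalIntegral.norm_integral_le_of_norm_le_const (a := 0) (b := 1)
    fun t ht => norm_hadamard_integrand_le hs hC ha hx ht

lemma isDerivSeqOn_hadamardSeq (hso : IsOpen s) (hs : s.OrdConnected) (hF : IsDerivSeqOn F s)
    (ha : a ∈ s) : IsDerivSeqOn (hadamardSeq F a) s := by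
  intro k x hx
  obtain ⟨p', q', -, hx', hsub'⟩ := exists_Icc_mem_subset_of_mem_nhds (hso.mem_nhds hx)
  obtain ⟨p, q, hsub, hapq, hpq⟩ := exists_Icc_superset_of_isCompact hs isCompact_Icc hsub' ha
  have hxpq : Icc p q ∈ nhds x := mem_of_superset hx' hsub
  obtain ⟨C, hC⟩ :=
    isCompact_Icc.exists_bound_of_continuousOn ((hF.continuousOn (k + 2)).mono hpq)
  refine (intervalIntegral.hasDerivAt_integral_of_dominated_loc_of_deriv_le
    (F := fun y t => t ^ k • F (k + 1) (a + t * (y - a)))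
    (F' := fun y t => t ^ (k + 1) • F (k + 2) (a + t * (y - a)))
    (bound := fun _ => C) hxpq ?_ (hF.intervalIntegrable_hadamard hs ha hx _ _)
    (hF.intervalIntegrable_hadamard hs ha hx _ _).def'.aestronglyMeasurable
    (.of_forall fun t ht y hy => norm_hadamard_integrand_le ordConnected_Icc hC hapq hy ht)
    intervalIntegrable_const (.of_forall fun t ht y hy => ?_)).2
  · filter_upwards [hxpq] with y hy
    exact (hF.intervalIntegrable_hadamard hs ha (hpq hy) _ _).def'.aestronglyMeasurable
  · rw [uIoc_of_le zero_le_one] at ht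
    have hmem : a + t * (y - a) ∈ s :=
      hs.convex.add_smul_sub_mem ha (hpq hy) (Ioc_subset_Icc_self ht)
    have hinner : HasDerivAt (fun y => a + t * (y - a)) t y := by
      simpa using (((hasDerivAt_id y).sub_const a).const_mul t).const_add a
    simpa only [smul_smul, ← pow_succ, Function.comp_def, Pi.smul_def] using
      ((hF (k + 1) _ hmem).scomp y hinner).const_smul (t ^ k)

lemma hadamardSeq_self [CompleteSpace E] (k : ℕ) :
    hadamardSeq F a k a = ((k : ℝ) + 1)⁻¹ • F (k + 1) a := by
  simp [hadamardSeq, intervalIntegral.integral_smul_const, integral_pow]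

lemma IsDerivSeqOn.hadamardSeq_zero_eqOn [CompleteSpace E] (hs : s.OrdConnected)
    (hF : IsDerivSeqOn F s) (ha : a ∈ s) : EqOn (hadamardSeq F a 0) (dslope (F 0) a) s := by
  intro x hx
  rcases eq_or_ne x a with rfl | hxa
  · simp [hadamardSeq_self, (hF 0 x ha).deriv]
  have hderiv : ∀ t ∈ uIcc (0 : ℝ) 1, HasDerivAt (fun t => F 0 (a + t * (x - a)))
      ((x - a) • t ^ 0 • F 1 (a + t * (x - a))) t := by
    intro t ht
    rw [uIcc_of_le zero_le_one] at ht
    have hinner : HasDerivAt (fun t => a + t * (x - a)) (x - a) t := by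
      simpa using ((hasDerivAt_id t).mul_const (x - a)).const_add a
    simpa [Function.comp_def] using
      (hF 0 _ (hs.convex.add_smul_sub_mem ha hx ht)).scomp t hinner
  have hftc : (x - a) • hadamardSeq F a 0 x = F 0 x - F 0 a := by
    rw [hadamardSeq, ← intervalIntegral.integral_smul,
      intervalIntegral.integral_eq_sub_of_hasDerivAt hderiv
        ((hF.intervalIntegrable_hadamard hs ha hx 0 1).smul (x - a))]
    simp
  rwa [← sub_smul_dslope, smul_right_inj (sub_ne_zero.mpr hxa)] at hftc

lemma contDiffOn_dslope [CompleteSpace E] (hso : IsOpen s) (hs : s.OrdConnected)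
    (hf : ContDiffOn ℝ (⊤ : ℕ∞) f s) (ha : a ∈ s) : ContDiffOn ℝ (⊤ : ℕ∞) (dslope f a) s := by
  have hF := isDerivSeqOn_iteratedDeriv hso hf
  have heq := hF.hadamardSeq_zero_eqOn hs ha
  rw [iteratedDeriv_zero] at heq
  exact ((isDerivSeqOn_hadamardSeq hso hs hF ha).contDiffOn hso).congr heq.symm

lemma iteratedDeriv_dslope_eqOn [CompleteSpace E] (hso : IsOpen s) (hs : s.OrdConnected)
    (hf : ContDiffOn ℝ (⊤ : ℕ∞) f s) (ha : a ∈ s) (k : ℕ) :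
    EqOn (iteratedDeriv k (dslope f a)) (hadamardSeq (fun k => iteratedDeriv k f) a k) s := by
  have hF := isDerivSeqOn_iteratedDeriv hso hf
  have heq := hF.hadamardSeq_zero_eqOn hs ha
  rw [iteratedDeriv_zero] at heq
  exact (heq.symm.iteratedDeriv_of_isOpen hso k).trans
    ((isDerivSeqOn_hadamardSeq hso hs hF ha).iteratedDeriv_eqOn hso k)

end SmoothFunctions

lemma exists_forall_lt_norm_le_mul {X E : Type*} [TopologicalSpace X]
    [SeminormedAddCommGroup E] {F : ℕ → X → E} {K : Set X}
    (hK : IsCompact K) (hF : ∀ k, ContinuousOn (F k) K) {w : ℕ → ℝ} (hw : ∀ k, 0 < w k) (n : ℕ) :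
    ∃ C, ∀ k < n, ∀ x ∈ K, ‖F k x‖ ≤ C * w k := by
  choose B hB using fun k => hK.exists_bound_of_continuousOn (hF k)
  obtain ⟨C, hC⟩ := ((Finset.range n).image fun k => B k / w k).bddAbove
  refine ⟨C, fun k hk x hx => (hB k x hx).trans ((div_le_iff₀ (hw k)).mp (hC ?_))⟩
  exact Finset.mem_coe.mpr (Finset.mem_image_of_mem _ (Finset.mem_range.mpr hk))

lemma norm_mul_norm_iteratedDeriv_div_factorial_le {𝕜 A : Type*} [NontriviallyNormedField 𝕜]
    [NormedField A] [NormedAlgebra 𝕜 A] {u g v : 𝕜 → A} {x : 𝕜} {k : ℕ}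
    (hu : ContDiffAt 𝕜 k u x) (hg : ContDiffAt 𝕜 k g x) (hv : u * g =ᶠ[nhds x] v) :
    ‖u x‖ * (‖iteratedDeriv k g x‖ / k.factorial) ≤
      ‖iteratedDeriv k v x‖ / k.factorial + ∑ l ∈ Finset.range k,
        ‖iteratedDeriv (k - l) u x‖ / (k - l).factorial *
          (‖iteratedDeriv l g x‖ / l.factorial) := by
  have hleib : u x * iteratedDeriv k g x = iteratedDeriv k v x - ∑ l ∈ Finset.range k,
      k.choose l * iteratedDeriv l g x * iteratedDeriv (k - l) u x := by
    rw [← hv.iteratedDeriv_eq, mul_comm u g, iteratedDeriv_mul hg hu, Finset.sum_range_succ]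
    simp [mul_comm]
  rw [mul_div_assoc', ← norm_mul, hleib, div_le_iff₀ (by positivity), add_mul,
    div_mul_cancel₀ _ (by positivity), Finset.sum_mul]
  refine (norm_sub_le _ _).trans (add_le_add_right ((norm_sum_le _ _).trans ?_) _)
  refine Finset.sum_le_sum fun l hl => ?_
  calc ‖(k.choose l : A) * iteratedDeriv l g x * iteratedDeriv (k - l) u x‖
      ≤ k.choose l * ‖iteratedDeriv l g x‖ * ‖iteratedDeriv (k - l) u x‖ := by
        rw [norm_mul, norm_mul]
        gcongr
        simpa using Nat.norm_cast_le (α := A) (k.choose l)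
    _ = ‖iteratedDeriv (k - l) u x‖ / (k - l).factorial *
        (‖iteratedDeriv l g x‖ / l.factorial) * k.factorial := by
      rw [Nat.cast_choose ℝ (Finset.mem_range.mp hl).le]
      ring

lemma norm_iteratedDeriv_div_factorial_le_of_mul_eq {𝕜 A : Type*} [NontriviallyNormedField 𝕜]
    [NormedField A] [NormedAlgebra 𝕜 A] {u g v : 𝕜 → A} {x : 𝕜} {w : ℕ → ℝ} {c C : ℝ}
    (hu : ContDiffAt 𝕜 (⊤ : ℕ∞) u x) (hg : ContDiffAt 𝕜 (⊤ : ℕ∞) g x) (hv : u * g =ᶠ[nhds x] v)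
    (hc : 0 < c) (hcu : c ≤ ‖u x‖) (huw : ∀ k, ‖iteratedDeriv k u x‖ / k.factorial ≤ C * w k)
    (hvw : ∀ k, ‖iteratedDeriv k v x‖ / k.factorial ≤ C * w k) (k : ℕ) :
    ‖iteratedDeriv k g x‖ / k.factorial ≤ C / c * w k +
      ∑ l ∈ Finset.range k, C / c * w (k - l) * (‖iteratedDeriv l g x‖ / l.factorial) := by
  have hk : (k : WithTop ℕ∞) ≤ (⊤ : ℕ∞) := by exact_mod_cast le_top
  refine le_of_mul_le_mul_left ?_ hc
  calc c * (‖iteratedDeriv k g x‖ / k.factorial)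
      ≤ ‖u x‖ * (‖iteratedDeriv k g x‖ / k.factorial) := by gcongr
    _ ≤ ‖iteratedDeriv k v x‖ / k.factorial + ∑ l ∈ Finset.range k,
          ‖iteratedDeriv (k - l) u x‖ / (k - l).factorial *
            (‖iteratedDeriv l g x‖ / l.factorial) :=
        norm_mul_norm_iteratedDeriv_div_factorial_le (hu.of_le hk) (hg.of_le hk) hv
    _ ≤ C * w k + ∑ l ∈ Finset.range k,
          C * w (k - l) * (‖iteratedDeriv l g x‖ / l.factorial) := by
        gcongr
        · exact hvw k
        · exact huw _
    _ = c * (C / c * w k + ∑ l ∈ Finset.range k,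
          C / c * w (k - l) * (‖iteratedDeriv l g x‖ / l.factorial)) := by
        rw [mul_add, Finset.mul_sum]
        field_simp

lemma div_factorial_le_mul_mseq_iff {M : ℕ → ℝ} {y C σ : ℝ} {k : ℕ} :
    y / k.factorial ≤ C * (σ ^ k * mseq M k) ↔ y ≤ C * σ ^ k * M k := by
  rw [mseq, mul_div_assoc', mul_div_assoc', div_le_div_iff_of_pos_right (by positivity), mul_assoc]

section Beurling

variable {M : ℕ → ℝ} {f u v : ℝ → ℂ} {U V : Set ℝ} {a : ℝ}

lemma beurlingOn_iff_forall_isCompact (hU : IsOpen U) :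
    BeurlingOn M f U ↔ ContDiffOn ℝ (⊤ : ℕ∞) f U ∧ ∀ K ⊆ U, IsCompact K → ∀ σ : ℝ, 0 < σ →
      ∃ C : ℝ, 0 < C ∧ ∀ x ∈ K, ∀ k, ‖iteratedDeriv k f x‖ ≤ C * σ ^ k * M k := by
  have hnorm {x : ℝ} (hx : x ∈ U) (k : ℕ) :
      ‖iteratedFDerivWithin ℝ k f U x‖ = ‖iteratedDeriv k f x‖ := by
    rw [norm_iteratedFDerivWithin_eq_norm_iteratedDerivWithin, iteratedDerivWithin_of_isOpen hU hx]
  refine and_congr_right fun _ => ⟨fun h K hKU hK σ hσ => ?_, fun h V _ hV hVU σ hσ => ?_⟩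
  · obtain ⟨V, hVo, hKV, hVU, hV⟩ := exists_open_between_and_isCompact_closure hK hU hKU
    obtain ⟨C, hC, hb⟩ := h V hVo hV hVU σ hσ
    exact ⟨C, hC, fun x hx k => hnorm (hKU hx) k ▸ hb x (hKV hx) k⟩
  · obtain ⟨C, hC, hb⟩ := h (closure V) hVU hV σ hσ
    exact ⟨C, hC, fun x hx k =>
      (hnorm (hVU (subset_closure hx)) k).symm ▸ hb x (subset_closure hx) k⟩

lemma BeurlingOn.mono (hf : BeurlingOn M f U) (hU : IsOpen U) (hV : IsOpen V) (hVU : V ⊆ U) :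
    BeurlingOn M f V := by
  rw [beurlingOn_iff_forall_isCompact hU] at hf
  rw [beurlingOn_iff_forall_isCompact hV]
  exact ⟨hf.1.mono hVU, fun K hKV => hf.2 K (hKV.trans hVU)⟩

lemma BeurlingOn.congr (hf : BeurlingOn M f U) (huf : EqOn u f U) : BeurlingOn M u U := by
  refine ⟨hf.1.congr huf, fun V hVo hV hVU σ hσ => ?_⟩
  obtain ⟨C, hC, hb⟩ := hf.2 V hVo hV hVU σ hσ
  refine ⟨C, hC, fun x hx k => ?_⟩
  rw [iteratedFDerivWithin_congr huf (hVU (subset_closure hx))]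
  exact hb x hx k

lemma beurlingOn_zero (hpos : ∀ k, 0 < M k) (hU : IsOpen U) : BeurlingOn M 0 U := by
  refine (beurlingOn_iff_forall_isCompact hU).mpr
    ⟨contDiffOn_const, fun K _ _ σ hσ => ⟨1, one_pos, fun x _ k => ?_⟩⟩
  have := hpos k
  simpa [iteratedDeriv_const_zero] using by positivity

lemma exists_norm_iteratedDeriv_le_of_mul_eq (hpos : ∀ k, 0 < M k)
    (hm : LogConvexSeq (mseq M)) (hroot : RootTendsToInfty (mseq M)) {g : ℝ → ℂ} {K : Set ℝ}
    {c C σ ρ : ℝ} (hU : IsOpen U) (hu : ContDiffOn ℝ (⊤ : ℕ∞) u U)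
    (hg : ContDiffOn ℝ (⊤ : ℕ∞) g U) (hug : EqOn (u * g) v U) (hKU : K ⊆ U) (hK : IsCompact K)
    (hc : 0 < c) (hcu : ∀ x ∈ K, c ≤ ‖u x‖) (hC : 0 < C) (hσ : 0 ≤ σ) (hσρ : σ < ρ)
    (hbu : ∀ x ∈ K, ∀ k, ‖iteratedDeriv k u x‖ ≤ C * σ ^ k * M k)
    (hbv : ∀ x ∈ K, ∀ k, ‖iteratedDeriv k v x‖ ≤ C * σ ^ k * M k) :
    ∃ B : ℝ, 0 < B ∧ ∀ x ∈ K, ∀ k, ‖iteratedDeriv k g x‖ ≤ B * ρ ^ k * M k := by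
  have hρ : 0 < ρ := hσ.trans_lt hσρ
  obtain ⟨n, hn⟩ := hm.exists_forall_le_of_recursion
    (fun k => div_pos (hpos k) (by positivity)) hroot (div_pos hC hc).le hσ hσρ
  obtain ⟨D, hD⟩ := exists_forall_lt_norm_le_mul hK
    (fun k => ((isDerivSeqOn_iteratedDeriv hU hg).continuousOn k).mono hKU)
    (fun k => mul_pos (pow_pos hρ k) (hpos k)) n
  set B := max (2 * (C / c)) D
  have hB : 0 < B := lt_max_of_lt_left (by positivity)
  refine ⟨B, hB, fun x hx k => div_factorial_le_mul_mseq_iff.mp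
    (hn (fun k => ‖iteratedDeriv k g x‖ / k.factorial) B (le_max_left _ _) ?_ ?_ k)⟩
  · have hxU := hU.mem_nhds (hKU hx)
    exact norm_iteratedDeriv_div_factorial_le_of_mul_eq (hu.contDiffAt hxU)
      (hg.contDiffAt hxU) (hug.eventuallyEq_of_mem hxU) hc (hcu x hx)
      (fun k => div_factorial_le_mul_mseq_iff.mpr (hbu x hx k))
      fun k => div_factorial_le_mul_mseq_iff.mpr (hbv x hx k)
  · intro k hk
    have := hpos k
    rw [div_factorial_le_mul_mseq_iff, mul_assoc]
    exact (hD k hk x hx).trans (by gcongr; exact le_max_right _ _)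

theorem BeurlingOn.div (hpos : ∀ k, 0 < M k) (hm : LogConvexSeq (mseq M))
    (hroot : RootTendsToInfty (mseq M)) (hU : IsOpen U) (hv : BeurlingOn M v U)
    (hu : BeurlingOn M u U) (hu0 : ∀ x ∈ U, u x ≠ 0) : BeurlingOn M (v / u) U := by
  rw [beurlingOn_iff_forall_isCompact hU] at hu hv ⊢
  have hdiv : ContDiffOn ℝ (⊤ : ℕ∞) (v / u) U :=
    (hv.1.mul (hu.1.inv hu0)).congr fun x _ => div_eq_mul_inv (v x) (u x)
  refine ⟨hdiv, fun K hKU hK ρ hρ => ?_⟩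
  obtain ⟨c, hc, hcu⟩ := hK.exists_forall_le' (hu.1.continuousOn.mono hKU).norm
    (a := 0) fun x hx => norm_pos_iff.mpr (hu0 x (hKU hx))
  obtain ⟨Cu, hCu, hbu⟩ := hu.2 K hKU hK (ρ / 2) (half_pos hρ)
  obtain ⟨Cv, -, hbv⟩ := hv.2 K hKU hK (ρ / 2) (half_pos hρ)
  have hle {D : ℝ} (hD : D ≤ max Cu Cv) (k : ℕ) :
      D * (ρ / 2) ^ k * M k ≤ max Cu Cv * (ρ / 2) ^ k * M k := by
    have := hpos k
    gcongr
  exact exists_norm_iteratedDeriv_le_of_mul_eq hpos hm hroot hU hu.1 hdiv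
    (fun x hx => mul_div_cancel₀ (v x) (hu0 x hx)) hKU hK hc hcu (lt_max_of_lt_left hCu)
    (half_pos hρ).le (half_lt_self hρ) (fun x hx k => (hbu x hx k).trans (hle (le_max_left _ _) k))
    fun x hx k => (hbv x hx k).trans (hle (le_max_right _ _) k)

protected theorem BeurlingOn.dslope (hdc : DerivClosed M) (hUo : IsOpen U)
    (hU : U.OrdConnected) (hf : BeurlingOn M f U) (ha : a ∈ U) :
    BeurlingOn M (dslope f a) U := by
  rw [beurlingOn_iff_forall_isCompact hUo] at hf ⊢
  refine ⟨contDiffOn_dslope hUo hU hf.1 ha, fun K hKU hK σ hσ => ?_⟩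
  obtain ⟨A, hA, hAM⟩ := hdc
  obtain ⟨p, q, hKpq, hapq, hpq⟩ := exists_Icc_superset_of_isCompact hU hK hKU ha
  obtain ⟨C, hC, hb⟩ := hf.2 (Icc p q) hpq isCompact_Icc (σ / A) (div_pos hσ hA)
  refine ⟨C * σ, mul_pos hC hσ, fun x hx k => ?_⟩
  rw [iteratedDeriv_dslope_eqOn hUo hU hf.1 ha k (hKU hx)]
  calc ‖hadamardSeq (fun k => iteratedDeriv k f) a k x‖
      ≤ C * (σ / A) ^ (k + 1) * M (k + 1) :=
        norm_hadamardSeq_le ordConnected_Icc (fun y hy => hb y hy (k + 1)) hapq (hKpq hx)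
    _ ≤ C * (σ / A) ^ (k + 1) * (A ^ (k + 1) * M k) := by gcongr; exact hAM k
    _ = C * σ * σ ^ k * M k := by rw [div_pow]; field_simp; ring

theorem BeurlingOn.eqOn_zero_of_iteratedDeriv_eq_zero (hM : LogConvexSeq M) (hpos : ∀ k, 0 < M k)
    (hq : Quasianalytic M) (hUo : IsOpen U) (hU : U.OrdConnected) (hf : BeurlingOn M f U)
    (ha : a ∈ U) (hflat : ∀ k, iteratedDeriv k f a = 0) : EqOn f 0 U := by
  rw [beurlingOn_iff_forall_isCompact hUo] at hf
  intro x hx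
  obtain ⟨p, q, hxpq, hapq, hpq⟩ := exists_Icc_superset_of_isCompact hU isCompact_singleton
    (singleton_subset_iff.mpr hx) ha
  obtain ⟨C, hC, hb⟩ := hf.2 (Icc p q) hpq isCompact_Icc 1 one_pos
  have hCM : LogConvexSeq fun k => C * M k := fun k hk => by
    calc (C * M k) ^ 2 = C ^ 2 * M k ^ 2 := mul_pow _ _ _
      _ ≤ C ^ 2 * (M (k - 1) * M (k + 1)) := by gcongr; exact hM k hk
      _ = C * M (k - 1) * (C * M (k + 1)) := by ring
  have hCq : Quasianalytic fun k => C * M k := by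
    simpa only [Quasianalytic, NonQuasianalytic, mul_div_mul_left _ _ hC.ne'] using hq
  simpa using ((isDerivSeqOn_iteratedDeriv hUo hf.1).mono hpq).eqOn_zero_of_quasianalytic hCM
    (fun k => mul_pos hC (hpos k)) hCq ordConnected_Icc
    (fun y hy k => by simpa using hb y hy k) hapq hflat (hxpq rfl)

end Beurling

section Germs

open scoped Topology

variable {M : ℕ → ℝ} {f u v : ℝ → ℂ} {a : ℝ}

/-- `f` is of class `E^{(M)}` on some open neighbourhood of `a`, that is, `f` represents an element
of the ring of germs of `E^{(M)}`-functions at `a`. -/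
def BeurlingAt (M : ℕ → ℝ) (f : ℝ → ℂ) (a : ℝ) : Prop :=
  ∃ U : Set ℝ, IsOpen U ∧ a ∈ U ∧ BeurlingOn M f U

lemma BeurlingAt.eventually_beurlingOn_ball (hf : BeurlingAt M f a) :
    ∀ᶠ ε in 𝓝 (0 : ℝ), BeurlingOn M f (Metric.ball a ε) := by
  obtain ⟨U, hU, haU, hfU⟩ := hf
  filter_upwards [eventually_ball_subset (hU.mem_nhds haU)] with ε hε
  exact hfU.mono hU Metric.isOpen_ball hε

lemma BeurlingOn.beurlingAt_of_ball {ε : ℝ} (hε : 0 < ε) (hf : BeurlingOn M f (Metric.ball a ε)) :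
    BeurlingAt M f a :=
  ⟨Metric.ball a ε, Metric.isOpen_ball, Metric.mem_ball_self hε, hf⟩

lemma BeurlingAt.continuousAt (hf : BeurlingAt M f a) : ContinuousAt f a := by
  obtain ⟨U, hU, haU, hfU⟩ := hf
  exact hfU.1.continuousOn.continuousAt (hU.mem_nhds haU)

lemma beurlingAt_zero (hpos : ∀ k, 0 < M k) : BeurlingAt M 0 a :=
  ⟨univ, isOpen_univ, mem_univ a, beurlingOn_zero hpos isOpen_univ⟩

lemma BeurlingAt.congr (hf : BeurlingAt M f a) (huf : u =ᶠ[𝓝 a] f) : BeurlingAt M u a := by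
  obtain ⟨ε, hε0, hfε, hε⟩ :=
    (hf.eventually_beurlingOn_ball.and (eventually_ball_subset huf)).exists_gt
  exact (hfε.congr hε).beurlingAt_of_ball hε0

lemma BeurlingAt.div (hpos : ∀ k, 0 < M k) (hm : LogConvexSeq (mseq M))
    (hroot : RootTendsToInfty (mseq M)) (hv : BeurlingAt M v a) (hu : BeurlingAt M u a)
    (hu0 : u a ≠ 0) : BeurlingAt M (v / u) a := by
  obtain ⟨ε, hε0, ⟨hvε, huε⟩, hε⟩ :=
    ((hv.eventually_beurlingOn_ball.and hu.eventually_beurlingOn_ball).and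
      (eventually_ball_subset (hu.continuousAt.eventually_ne hu0))).exists_gt
  exact (hvε.div hpos hm hroot Metric.isOpen_ball huε hε).beurlingAt_of_ball hε0

protected lemma BeurlingAt.dslope (hdc : DerivClosed M) (hf : BeurlingAt M f a) :
    BeurlingAt M (dslope f a) a := by
  obtain ⟨ε, hε, hfε⟩ := hf.eventually_beurlingOn_ball.exists_gt
  exact (hfε.dslope hdc Metric.isOpen_ball (convex_ball a ε).ordConnected
    (Metric.mem_ball_self hε)).beurlingAt_of_ball hε

lemma BeurlingAt.iteratedDeriv_dslope (hf : BeurlingAt M f a) (k : ℕ) :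
    iteratedDeriv k (dslope f a) a = ((k : ℝ) + 1)⁻¹ • iteratedDeriv (k + 1) f a := by
  obtain ⟨ε, hε, hfε⟩ := hf.eventually_beurlingOn_ball.exists_gt
  have ha := Metric.mem_ball_self (x := a) hε
  rw [iteratedDeriv_dslope_eqOn Metric.isOpen_ball (convex_ball a ε).ordConnected hfε.1 ha k ha,
    hadamardSeq_self]

lemma BeurlingAt.eventuallyEq_zero (hM : LogConvexSeq M) (hpos : ∀ k, 0 < M k)
    (hq : Quasianalytic M) (hf : BeurlingAt M f a) (hflat : ∀ k, iteratedDeriv k f a = 0) :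
    f =ᶠ[𝓝 a] 0 := by
  obtain ⟨ε, hε, hfε⟩ := hf.eventually_beurlingOn_ball.exists_gt
  exact (hfε.eqOn_zero_of_iteratedDeriv_eq_zero hM hpos hq Metric.isOpen_ball
    (convex_ball a ε).ordConnected (Metric.mem_ball_self hε) hflat).eventuallyEq_of_mem
    (Metric.ball_mem_nhds a hε)

lemma BeurlingAt.exists_eventuallyEq_pow_smul (hdc : DerivClosed M) {n : ℕ}
    (hf : BeurlingAt M f a) (hflat : ∀ i < n, iteratedDeriv i f a = 0) :
    ∃ u, BeurlingAt M u a ∧ (f =ᶠ[𝓝 a] fun x => (x - a) ^ n • u x) ∧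
      iteratedDeriv n f a = (n.factorial : ℝ) • u a := by
  induction n generalizing f with
  | zero => exact ⟨f, hf, by simp, by simp⟩
  | succ n ih =>
    obtain ⟨u, hu, hfu, hua⟩ := ih (hf.dslope hdc) fun i hi => by
      rw [hf.iteratedDeriv_dslope, hflat (i + 1) (by lia), smul_zero]
    refine ⟨u, hu, ?_, ?_⟩
    · have hfa : f a = 0 := by simpa using hflat 0 n.succ_pos
      filter_upwards [hfu] with x hx
      rw [pow_succ', mul_smul, ← hx, sub_smul_dslope, hfa, sub_zero]
    · rw [Nat.factorial_succ, Nat.cast_mul, mul_smul, ← hua, hf.iteratedDeriv_dslope]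
      push_cast
      rw [smul_inv_smul₀ (by positivity)]

lemma eventuallyEq_of_pow_smul_eq {E : Type*} [TopologicalSpace E] [T2Space E]
    [AddCommGroup E] [Module ℝ E] {g h : ℝ → E} {n : ℕ} (hg : ContinuousAt g a)
    (hh : ContinuousAt h a) (hgh : ∀ᶠ x in 𝓝 a, (x - a) ^ n • g x = (x - a) ^ n • h x) :
    g =ᶠ[𝓝 a] h := by
  rw [← hg.eventuallyEq_nhds_iff_eventuallyEq_nhdsNE hh]
  filter_upwards [hgh.filter_mono nhdsWithin_le_nhds, self_mem_nhdsWithin] with x hx hxa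
  exact smul_right_injective E (pow_ne_zero n (sub_ne_zero.mpr hxa)) hx

lemma BeurlingAt.iteratedDeriv_eq_zero_of_pow_eq (hdc : DerivClosed M) (hf : BeurlingAt M f a)
    {w : ℝ → ℂ} (hw : ContinuousAt w a) {p q : ℕ}
    (hfw : ∀ᶠ x in 𝓝 a, f x ^ p = (x - a) ^ q • w x) {i : ℕ} (hi : i * p < q) :
    iteratedDeriv i f a = 0 := by
  induction i using Nat.strong_induction_on with
  | _ i ih =>
    obtain ⟨u, hu, hfu, hua⟩ := hf.exists_eventuallyEq_pow_smul hdc fun l hl =>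
      ih l hl ((Nat.mul_le_mul_right p hl.le).trans_lt hi)
    have hupow : (fun x => u x ^ p) =ᶠ[𝓝 a] fun x => (x - a) ^ (q - i * p) • w x := by
      refine eventuallyEq_of_pow_smul_eq (n := i * p) (hu.continuousAt.pow p)
        (((continuousAt_id.sub_const a).pow _).smul hw) ?_
      filter_upwards [hfw, hfu] with x hx hxu
      rw [smul_smul, ← pow_add, Nat.add_sub_cancel' hi.le, ← hx, hxu, smul_pow, pow_mul]
    have hua0 : u a = 0 := eq_zero_of_pow_eq_zero (n := p) <| by
      simpa [Nat.sub_ne_zero_of_lt hi] using hupow.eq_of_nhds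
    rw [hua, hua0, smul_zero]

lemma eq_of_pow_eq_of_pow_succ_eq {G₀ : Type*} [GroupWithZero G₀] {x y : G₀} {j : ℕ} (hj : j ≠ 0)
    (h : x ^ j = y ^ j) (h' : x ^ (j + 1) = y ^ (j + 1)) : x = y := by
  rcases eq_or_ne x 0 with rfl | hx
  · exact (eq_zero_of_pow_eq_zero (h.symm.trans (zero_pow hj))).symm
  · rw [pow_succ, pow_succ, ← h] at h'
    exact mul_left_cancel₀ (pow_ne_zero j hx) h'

lemma eventuallyEq_of_eventuallyEq_nhdsNE_of_continuousAt_pow {X 𝕜 : Type*} [TopologicalSpace X]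
    [DivisionRing 𝕜] [TopologicalSpace 𝕜] [ContinuousMul 𝕜] [T2Space 𝕜] {x : X} [(𝓝[≠] x).NeBot]
    {f g : X → 𝕜} {j : ℕ} (hj : j ≠ 0) (hfj : ContinuousAt (f ^ j) x)
    (hfj' : ContinuousAt (f ^ (j + 1)) x) (hg : ContinuousAt g x) (hfg : f =ᶠ[𝓝[≠] x] g) :
    f =ᶠ[𝓝 x] g := by
  have hpow := (hfj.eventuallyEq_nhds_iff_eventuallyEq_nhdsNE (hg.pow j)).mp (hfg.pow_const j)
  have hpow' := (hfj'.eventuallyEq_nhds_iff_eventuallyEq_nhdsNE (hg.pow (j + 1))).mp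
    (hfg.pow_const (j + 1))
  filter_upwards [hpow, hpow'] with y hy hy' using eq_of_pow_eq_of_pow_succ_eq hj hy hy'

lemma eventuallyEq_div_of_pow_eq {j n : ℕ} (hj : j ≠ 0) (hfj : ContinuousAt (f ^ j) a)
    (hfj' : ContinuousAt (f ^ (j + 1)) a) (hu : ContinuousAt u a) (hv : ContinuousAt v a)
    (hu0 : u a ≠ 0) (hfu : f ^ j =ᶠ[𝓝 a] fun x => (x - a) ^ n • u x)
    (hfv : f ^ (j + 1) =ᶠ[𝓝 a] fun x => (x - a) ^ n • v x) : f =ᶠ[𝓝 a] v / u := by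
  refine eventuallyEq_of_eventuallyEq_nhdsNE_of_continuousAt_pow hj hfj hfj' (hv.div hu hu0) ?_
  have hne := hu.eventually_ne hu0
  filter_upwards [hfu.filter_mono nhdsWithin_le_nhds, hfv.filter_mono nhdsWithin_le_nhds,
    hne.filter_mono nhdsWithin_le_nhds, self_mem_nhdsWithin] with x hxu hxv hux hxa
  have hxn : (x - a) ^ n ≠ 0 := pow_ne_zero n (sub_ne_zero.mpr hxa)
  refine (eq_div_iff hux).mpr (smul_right_injective ℂ hxn ?_)
  calc (x - a) ^ n • (f x * u x) = f x * (f ^ j) x := by rw [hxu, mul_smul_comm]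
    _ = (f ^ (j + 1)) x := (pow_succ' (f x) j).symm
    _ = (x - a) ^ n • v x := hxv

end Germs

/-- the ring of germs at `0 ∈ ℝ` of `E^{(M)}`-functions has property (D)
for a quasianalytic derivation closed weight sequence `M` with `m` log-convex and
`m_k^{1/k} → ∞`. -/
theorem statement5 (M : ℕ → ℝ)
    (hM : IsWeightSeq M) (hq : Quasianalytic M) (hdc : DerivClosed M)
    (hmlc : LogConvexSeq (mseq M)) (hmroot : RootTendsToInfty (mseq M))
    (f : ℝ → ℂ) (j : ℕ) (hj : 1 ≤ j)
    (h1 : ∃ U : Set ℝ, IsOpen U ∧ (0 : ℝ) ∈ U ∧ BeurlingOn M (f ^ j) U)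
    (h2 : ∃ U : Set ℝ, IsOpen U ∧ (0 : ℝ) ∈ U ∧ BeurlingOn M (f ^ (j + 1)) U) :
    ∃ U : Set ℝ, IsOpen U ∧ (0 : ℝ) ∈ U ∧ BeurlingOn M f U := by
  obtain ⟨-, hpos, -, hMlc, -⟩ := hM
  have hfj : BeurlingAt M (f ^ j) 0 := h1
  have hfj' : BeurlingAt M (f ^ (j + 1)) 0 := h2
  have hj0 : j ≠ 0 := Nat.one_le_iff_ne_zero.mp hj
  change BeurlingAt M f 0
  by_cases hflat : ∀ k, iteratedDeriv k (f ^ j) 0 = 0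
  · exact (beurlingAt_zero hpos).congr <|
      (hfj.eventuallyEq_zero hMlc hpos hq hflat).mono fun _ => eq_zero_of_pow_eq_zero
  classical
  push Not at hflat
  obtain ⟨u, hu, hfu, hu0⟩ := hfj.exists_eventuallyEq_pow_smul hdc fun i hi =>
    not_not.mp (Nat.find_min hflat hi)
  set n := Nat.find hflat
  replace hu0 : u 0 ≠ 0 := right_ne_zero_of_smul (hu0 ▸ Nat.find_spec hflat)
  have hpow : ∀ᶠ x in nhds 0, (f ^ (j + 1)) x ^ j = (x - 0) ^ (n * (j + 1)) • u x ^ (j + 1) := by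
    filter_upwards [hfu] with x hx
    rw [Pi.pow_apply, pow_right_comm, ← Pi.pow_apply f j, hx, smul_pow, pow_mul]
  obtain ⟨v, hv, hfv, -⟩ := hfj'.exists_eventuallyEq_pow_smul (n := n) hdc fun i hi =>
    hfj'.iteratedDeriv_eq_zero_of_pow_eq hdc (hu.continuousAt.pow (j + 1)) hpow (by nlinarith)
  exact (hv.div hpos hmlc hmroot hu hu0).congr <| eventuallyEq_div_of_pow_eq hj0
    hfj.continuousAt hfj'.continuousAt hu.continuousAt hv.continuousAt hu0 hfu hfv
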